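/- arXiv:1512.07505 — 2 statements merged into one kernel-verified Lean document; each statement's English description precedes it below -/
import Mathlib

section
/- Let P be a set of n points in general position in R^d with n = d² + d + 1. Then there exists a subset S ⊆ P of d+1 points and a partition of P \ S into d sets D_1, ..., D_d such that the convex hulls conv(D_1), ..., conv(D_d) have a common point, and the lexicographic minimum of their intersection belongs to conv(S). -/
/-- Lexicographic strict order on `ℝ^d`. -/
def LexLt {d : ℕ} (x y : Fin d → ℝ) : Prop :=
  ∃ i : Fin d, (∀ j : Fin d, j < i → x j = y j) ∧ x i < y i

/-- `m` is the lexicographic minimum of `S`. -/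
def IsLexMin {d : ℕ} (S : Set (Fin d → ℝ)) (m : Fin d → ℝ) : Prop :=
  m ∈ S ∧ ∀ x ∈ S, m = x ∨ LexLt m x

theorem tv_mem_hull_range {K E : Type*} [Fintype K] [AddCommGroup E] [Module ℝ E]
    (v : K → E) (x : E) (hx : x ∈ convexHull ℝ (Set.range v)) :
    ∃ w : K → ℝ, (∀ k, 0 ≤ w k) ∧ ∑ k, w k = 1 ∧ ∑ k, w k • v k = x := by
  classical
  have hsub : convexHull ℝ (Set.range v) ⊆
      {x | ∃ w : K → ℝ, (∀ k, 0 ≤ w k) ∧ ∑ k, w k = 1 ∧ ∑ k, w k • v k = x} := by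
    apply convexHull_min
    · rintro _ ⟨k, rfl⟩
      refine ⟨Pi.single k 1, ?_, ?_, ?_⟩
      · intro j
        by_cases h : j = k
        · subst h; simp
        · simp [h]
      · simp
      · simp [Pi.single_apply]
    · rintro x ⟨w, hw0, hw1, rfl⟩ y ⟨u, hu0, hu1, rfl⟩ a b ha hb hab
      refine ⟨fun k => a * w k + b * u k, ?_, ?_, ?_⟩
      · intro k
        have := hw0 k
        have := hu0 k
        positivity
      · rw [Finset.sum_add_distrib, ← Finset.mul_sum, ← Finset.mul_sum, hw1, hu1]
        linarith
      · simp only [add_smul, Finset.sum_add_distrib, mul_smul, Finset.smul_sum]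
  exact hsub hx

theorem tv_min_norm {E : Type*} [NormedAddCommGroup E] [InnerProductSpace ℝ E]
    (s : Set E) (hs : Convex ℝ s) (y z : E) (hy : y ∈ s) (hz : z ∈ s)
    (hmin : ∀ x ∈ s, ‖y‖ ≤ ‖x‖) : ‖y‖ ^ 2 ≤ inner ℝ z y := by
  by_contra hlt
  push Not at hlt
  have key : ∀ t : ℝ, 0 ≤ t → t ≤ 1 →
      0 ≤ 2 * t * (inner ℝ z y - ‖y‖ ^ 2) + t ^ 2 * ‖z - y‖ ^ 2 := by
    intro t h0 h1
    have hm : y + t • (z - y) ∈ s := hs.add_smul_sub_mem hy hz ⟨h0, h1⟩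
    have h2 := hmin _ hm
    have h3 : ‖y‖ ^ 2 ≤ ‖y + t • (z - y)‖ ^ 2 := by gcongr
    rw [norm_add_sq_real, norm_smul, mul_pow, inner_smul_right, inner_sub_right,
      real_inner_self_eq_norm_sq, real_inner_comm] at h3
    simp only [Real.norm_eq_abs, sq_abs] at h3
    nlinarith
  set a := ‖y‖ ^ 2 - inner ℝ z y with ha
  set b := ‖z - y‖ ^ 2 with hb
  have hapos : 0 < a := by linarith
  have hbn : 0 ≤ b := by positivity
  have h := key (a / (a + b)) (by positivity) (by rw [div_le_one (by positivity)]; linarith)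
  have e : inner ℝ z y - ‖y‖ ^ 2 = - a := by rw [ha]; ring
  rw [e] at h
  have hab : 0 < a + b := by positivity
  have h' : 0 ≤ (2 * (a / (a + b)) * (-a) + (a / (a + b)) ^ 2 * b) * (a + b) ^ 2 := by positivity
  have h'' : (2 * (a / (a + b)) * (-a) + (a / (a + b)) ^ 2 * b) * (a + b) ^ 2
      = - (a ^ 2 * (2 * a + b)) := by
    field_simp
    ring
  rw [h''] at h'
  have : 0 < a ^ 2 * (2 * a + b) := by positivity
  linarith

/-- Colourful Caratheodory. -/
theorem tv_colorful {K J E : Type*} [Fintype K] [Finite J] [Nonempty J]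
    [NormedAddCommGroup E] [InnerProductSpace ℝ E] [FiniteDimensional ℝ E]
    (hK : Module.finrank ℝ E < Fintype.card K) (a : K → J → E)
    (ha : ∀ k, (0 : E) ∈ convexHull ℝ (Set.range (a k))) :
    ∃ c : K → J, (0 : E) ∈ convexHull ℝ (Set.range fun k => a k (c k)) := by
  classical
  have hKne : Nonempty K := Fintype.card_pos_iff.1 (by omega)
  let U : Set E := ⋃ c : K → J, convexHull ℝ (Set.range fun k => a k (c k))
  have hUc : IsCompact U :=
    isCompact_iUnion fun c => (Set.finite_range _).isCompact_convexHull ℝ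
  have hUne : U.Nonempty := by
    obtain ⟨k⟩ := hKne
    let c : K → J := fun _ => Classical.arbitrary J
    exact ⟨a k (c k), Set.mem_iUnion.2 ⟨c, subset_convexHull ℝ _ ⟨k, rfl⟩⟩⟩
  obtain ⟨y, hyU, hymin⟩ := hUc.exists_isMinOn hUne continuous_norm.continuousOn
  have hymin' : ∀ x ∈ U, ‖y‖ ≤ ‖x‖ := fun x hx => hymin hx
  obtain ⟨c, hc⟩ := Set.mem_iUnion.1 hyU
  have hminc : ∀ c' : K → J, ∀ x ∈ convexHull ℝ (Set.range fun k => a k (c' k)), ‖y‖ ≤ ‖x‖ :=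
    fun c' x hx => hymin' x (Set.mem_iUnion.2 ⟨c', hx⟩)
  by_cases hy0 : y = 0
  · exact ⟨c, hy0 ▸ hc⟩
  exfalso
  have hypos : 0 < ‖y‖ ^ 2 := by
    have := norm_pos_iff.2 hy0
    positivity
  have hge : ∀ k, ‖y‖ ^ 2 ≤ inner ℝ (a k (c k)) y := fun k =>
    tv_min_norm _ (convex_convexHull ℝ _) y _ hc (subset_convexHull ℝ _ ⟨k, rfl⟩) (hminc c)
  -- some representation with a vanishing weight
  have hrep : ∃ w : K → ℝ, (∀ k, 0 ≤ w k) ∧ ∑ k, w k = 1 ∧ ∑ k, w k • a k (c k) = y ∧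
      ∃ k, w k = 0 := by
    obtain ⟨w, hw0, hw1, hwy⟩ := tv_mem_hull_range _ _ hc
    by_cases hz : ∃ k, w k = 0
    · exact ⟨w, hw0, hw1, hwy, hz⟩
    push Not at hz
    have hwpos : ∀ k, 0 < w k := fun k => lt_of_le_of_ne (hw0 k) (hz k).symm
    have hsum0 : ∑ k, w k * (inner ℝ (a k (c k)) y - ‖y‖ ^ 2) = 0 := by
      simp only [mul_sub, Finset.sum_sub_distrib]
      rw [← Finset.sum_mul, hw1, one_mul]
      have : ∑ k, w k * inner ℝ (a k (c k)) y = inner ℝ y y := by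
        have h1 : inner ℝ (∑ k, w k • a k (c k)) y = (inner ℝ y y : ℝ) := by rw [hwy]
        rw [← h1, sum_inner]
        simp only [inner_smul_left, conj_trivial]
      rw [this, real_inner_self_eq_norm_sq, sub_self]
    have heq : ∀ k, inner ℝ (a k (c k)) y = ‖y‖ ^ 2 := by
      intro k
      have h1 := (Finset.sum_eq_zero_iff_of_nonneg (fun k _ =>
        mul_nonneg (hw0 k) (sub_nonneg.2 (hge k)))).1 hsum0 k (Finset.mem_univ k)
      rcases mul_eq_zero.1 h1 with h | h
      · exact absurd h (hz k)
      · linarith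
    have hdep : ¬ LinearIndependent ℝ (fun k => a k (c k)) := fun h =>
      absurd h.fintype_card_le_finrank (by omega)
    obtain ⟨g, hg0, k1, hk1⟩ := Fintype.not_linearIndependent_iff.1 hdep
    have hgs : ∑ k, g k = 0 := by
      have h1 : inner ℝ (∑ k, g k • a k (c k)) y = (0 : ℝ) := by rw [hg0, inner_zero_left]
      rw [sum_inner] at h1
      simp only [inner_smul_left, heq] at h1
      rw [← Finset.sum_mul] at h1
      rcases mul_eq_zero.1 h1 with h | h
      · simpa using h
      · exact absurd h hypos.ne'
    have hpos : ∃ k, 0 < g k := by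
      by_contra hno
      push Not at hno
      have := (Finset.sum_eq_zero_iff_of_nonpos (fun k _ => hno k)).1 hgs k1 (Finset.mem_univ _)
      exact hk1 this
    obtain ⟨k0, hk0m, hk0⟩ := Finset.exists_min_image (Finset.univ.filter fun k => 0 < g k)
      (fun k => w k / g k) (by obtain ⟨k, hk⟩ := hpos; exact ⟨k, by simpa using hk⟩)
    have hgk0 : 0 < g k0 := by simpa using hk0m
    refine ⟨fun k => w k - w k0 / g k0 * g k, ?_, ?_, ?_, k0, ?_⟩
    · intro k
      by_cases hgk : 0 < g k
      · have h1 := hk0 k (by simpa using hgk)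
        rw [le_div_iff₀ hgk] at h1
        linarith
      · have h2 : 0 ≤ w k0 / g k0 := div_nonneg (hw0 _) hgk0.le
        have := hw0 k
        push Not at hgk
        nlinarith
    · rw [Finset.sum_sub_distrib, ← Finset.mul_sum, hgs, hw1]; ring
    · simp only [sub_smul, mul_smul, Finset.sum_sub_distrib]
      rw [← Finset.smul_sum, hg0, hwy, smul_zero, sub_zero]
    · field_simp
      ring
  obtain ⟨w, hw0, hw1, hwy, k, hk⟩ := hrep
  -- some `j` with nonpositive inner product
  have hj : ∃ j, inner ℝ (a k j) y ≤ 0 := by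
    by_contra hno
    push Not at hno
    have hsub : convexHull ℝ (Set.range (a k)) ⊆ {x | 0 < inner ℝ x y} := by
      apply convexHull_min
      · rintro _ ⟨j, rfl⟩
        exact hno j
      · intro u hu v hv s t hs ht hst
        simp only [Set.mem_ofPred_eq] at hu hv ⊢
        rw [inner_add_left, inner_smul_left, inner_smul_left]
        simp only [conj_trivial]
        rcases hs.eq_or_lt with h | h
        · subst h
          have : t = 1 := by linarith
          subst this
          simpa using hv
        · have := mul_pos h hu
          have := mul_nonneg ht hv.le
          linarith
    have := hsub (ha k)
    simp at this
  obtain ⟨j, hj⟩ := hj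
  let c' := Function.update c k j
  have hy' : y ∈ convexHull ℝ (Set.range fun k => a k (c' k)) := by
    apply mem_convexHull_of_exists_fintype w (fun l => if l = k then a k j else a l (c l)) hw0 hw1
    · intro l
      refine ⟨l, ?_⟩
      by_cases h : l = k
      · subst h; simp [c']
      · simp [c', h]
    · rw [← hwy]
      apply Finset.sum_congr rfl
      intro l _
      by_cases h : l = k
      · subst h; simp [hk]
      · simp [h]
  have := tv_min_norm _ (convex_convexHull ℝ _) y (a k j) hy'
    (subset_convexHull ℝ _ ⟨k, by simp [c']⟩) (hminc c')
  linarith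

theorem tv_tverberg {K : Type*} [Fintype K] (d : ℕ) (hK : d * (d + 1) < Fintype.card K)
    (p : K → Fin d → ℝ) :
    ∃ (c : K → Option (Fin d)) (x : Fin d → ℝ), ∀ i, x ∈ convexHull ℝ (p '' {k | c k = i}) := by
  classical
  let q : K → Option (Fin d) → ℝ := fun k o => o.elim 1 (p k)
  let a : K → Option (Fin d) → EuclideanSpace ℝ (Fin d × Option (Fin d)) := fun k j =>
    WithLp.toLp 2 fun s => ((if j = some s.1 then 1 else 0) - (if j = none then 1 else 0)) * q k s.2
  obtain ⟨c, hc⟩ := tv_colorful (E := EuclideanSpace ℝ (Fin d × Option (Fin d)))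
    (by simpa using hK) a (by
      intro k
      apply mem_convexHull_of_exists_fintype (ι := Option (Fin d))
        (fun _ => (1 : ℝ) / (d + 1)) (fun j => a k j)
      · intro; positivity
      · simp; field_simp
      · intro j; exact ⟨j, rfl⟩
      · ext s
        simp [a, Fintype.sum_option])
  obtain ⟨w, hw0, hw1, hwy⟩ := tv_mem_hull_range _ _ hc
  -- the sums over the classes
  let W : Option (Fin d) → Option (Fin d) → ℝ := fun i o => ∑ k, if c k = i then w k * q k o else 0
  have hW : ∀ i o, W i o = W none o := by
    intro i o
    cases i with
    | none => rfl
    | some i =>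
      have h := congrArg (fun v => v (i, o)) hwy
      simp only [a, WithLp.ofLp_sum, Finset.sum_apply, WithLp.ofLp_smul, Pi.smul_apply, smul_eq_mul,
        WithLp.ofLp_zero, Pi.zero_apply] at h
      rw [← sub_eq_zero, ← h]
      simp only [W, ← Finset.sum_sub_distrib]
      apply Finset.sum_congr rfl
      intro k _
      split_ifs <;> simp
  have hm : ∑ i, W i none = 1 := by
    simp only [W]
    rw [Finset.sum_comm]
    simpa [q] using hw1
  have hm0 : (d + 1 : ℝ) * W none none = 1 := by
    have h1 := hm
    rw [Finset.sum_congr rfl (fun i _ => hW i none)] at h1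
    simpa using h1
  refine ⟨c, fun t => (d + 1 : ℝ) * W none (some t), fun i => ?_⟩
  have hx : (Finset.univ.filter fun k => c k = i).centerMass w p
      ∈ convexHull ℝ (p '' {k | c k = i}) := by
    apply Finset.centerMass_mem_convexHull
    · intro k _; exact hw0 k
    · have h1 : ∑ k ∈ Finset.univ.filter (fun k => c k = i), w k = W i none := by
        simp [W, q, Finset.sum_filter]
      rw [h1, hW]
      by_contra hno
      push Not at hno
      nlinarith [(by positivity : (0:ℝ) < d + 1)]
    · intro k hk
      exact ⟨k, by simpa using hk, rfl⟩
  convert hx using 1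
  have h1 : ∑ k ∈ Finset.univ.filter (fun k => c k = i), w k = W none none := by
    rw [← hW i]
    simp [W, q, Finset.sum_filter]
  ext t
  rw [Finset.centerMass, h1, ← hW i]
  have h2 : (W none none)⁻¹ = d + 1 := by
    exact inv_eq_of_mul_eq_one_left hm0
  rw [h2]
  simp [W, q, Finset.sum_filter, Finset.sum_apply]
  left
  apply Finset.sum_congr rfl
  intro k _
  split_ifs <;> simp

theorem tv_lex_total {d : ℕ} (x y : Fin d → ℝ) (h : ¬ LexLt y x) : x = y ∨ LexLt x y := by
  classical
  by_cases hxy : x = y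
  · exact Or.inl hxy
  right
  have hne : (Finset.univ.filter fun i => x i ≠ y i).Nonempty := by
    obtain ⟨i, hi⟩ := Function.ne_iff.1 hxy
    exact ⟨i, by simpa using hi⟩
  let i := (Finset.univ.filter fun i => x i ≠ y i).min' hne
  have hi : x i ≠ y i := by
    have := Finset.min'_mem _ hne
    simpa using this
  have hlt : ∀ j < i, x j = y j := by
    intro j hj
    by_contra hc
    have := Finset.min'_le (Finset.univ.filter fun i => x i ≠ y i) j (by simpa using hc)
    exact absurd hj (not_lt.2 this)
  rcases lt_or_gt_of_ne hi with h1 | h1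
  · exact ⟨i, hlt, h1⟩
  · exact absurd ⟨i, fun j hj => (hlt j hj).symm, h1⟩ h

theorem tv_lex_convex {d : ℕ} (m : Fin d → ℝ) : Convex ℝ {x | LexLt x m} := by
  rintro x ⟨i, hi, hi'⟩ y ⟨j, hj, hj'⟩ a b ha hb hab
  have hm : ∀ t, m t = a * m t + b * m t := fun t => by rw [← add_mul, hab, one_mul]
  rcases ha.eq_or_lt with h | ha'
  · subst h
    have : b = 1 := by linarith
    subst this
    refine ⟨j, ?_, ?_⟩
    · intro t ht; simpa using hj t ht
    · simpa using hj'
  rcases hb.eq_or_lt with h | hb'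
  · subst h
    have : a = 1 := by linarith
    subst this
    refine ⟨i, ?_, ?_⟩
    · intro t ht; simpa using hi t ht
    · simpa using hi'
  refine ⟨min i j, ?_, ?_⟩
  · intro t ht
    rw [lt_min_iff] at ht
    rw [hm t]
    simp [hi t ht.1, hj t ht.2]
  · rw [hm]
    simp only [Pi.add_apply, Pi.smul_apply, smul_eq_mul]
    rcases lt_trichotomy i j with h | h | h
    · rw [min_eq_left h.le, hj i h]
      nlinarith
    · subst h
      rw [min_self]
      nlinarith
    · rw [min_eq_right h.le, hi j h]
      nlinarith

theorem tv_lexmin_exists {d : ℕ} (X : Set (Fin d → ℝ)) (hX : IsCompact X) (hne : X.Nonempty) :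
    ∃ m, IsLexMin X m := by
  have key : ∀ k : ℕ, k ≤ d → ∃ m ∈ X, ∀ x ∈ X, (∀ j : Fin d, j.1 < k → m j = x j) ∨ LexLt m x := by
    intro k
    induction k with
    | zero =>
      intro _
      obtain ⟨m, hm⟩ := hne
      exact ⟨m, hm, fun x _ => Or.inl (fun j hj => absurd hj (by omega))⟩
    | succ k ih =>
      intro hk
      obtain ⟨m, hm, hmin⟩ := ih (by omega)
      let Y : Set (Fin d → ℝ) := X ∩ ⋂ j : {j : Fin d // j.1 < k}, {x | x j.1 = m j.1}
      have hY : IsCompact Y := by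
        apply hX.inter_right
        apply isClosed_iInter
        intro j
        exact isClosed_eq (continuous_apply _) continuous_const
      have hYne : Y.Nonempty := ⟨m, hm, by simp⟩
      obtain ⟨y, hyY, hy⟩ := hY.exists_isMinOn hYne
        (continuous_apply (⟨k, by omega⟩ : Fin d)).continuousOn
      have hyX : y ∈ X := hyY.1
      have hym : ∀ j : Fin d, j.1 < k → y j = m j := by
        intro j hj
        have := Set.mem_iInter.1 hyY.2 ⟨j, hj⟩
        exact this
      refine ⟨y, hyX, fun x hx => ?_⟩
      rcases hmin x hx with h | ⟨i, hi, hi'⟩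
      · have hxY : x ∈ Y := ⟨hx, Set.mem_iInter.2 fun j => (h j.1 j.2).symm⟩
        have hle : y ⟨k, by omega⟩ ≤ x ⟨k, by omega⟩ := hy hxY
        rcases hle.eq_or_lt with he | hl
        · left
          intro j hj
          rcases Nat.lt_succ_iff_lt_or_eq.1 hj with h1 | h1
          · rw [hym j h1, h j h1]
          · have : j = ⟨k, by omega⟩ := Fin.ext h1
            rw [this, he]
        · right
          refine ⟨⟨k, by omega⟩, fun j hj => ?_, hl⟩
          have h1 : j.1 < k := hj
          rw [hym j h1, h j h1]
      · by_cases hik : i.1 < k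
        · right
          refine ⟨i, fun j hj => ?_, ?_⟩
          · have h1 : j.1 < i.1 := hj
            rw [hym j (by omega), hi j hj]
          · rw [hym i hik]; exact hi'
        · have hxY : x ∈ Y := ⟨hx, Set.mem_iInter.2 fun j => (hi j.1 (by
            have := j.2
            show j.1.1 < i.1
            omega)).symm⟩
          have hle : y ⟨k, by omega⟩ ≤ x ⟨k, by omega⟩ := hy hxY
          have hxm : ∀ j : Fin d, j.1 < k → m j = x j := fun j hj => hi j (by
            show j.1 < i.1
            omega)
          rcases hle.eq_or_lt with he | hl
          · left
            intro j hj
            rcases Nat.lt_succ_iff_lt_or_eq.1 hj with h1 | h1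
            · rw [hym j h1, hxm j h1]
            · have : j = ⟨k, by omega⟩ := Fin.ext h1
              rw [this, he]
          · right
            refine ⟨⟨k, by omega⟩, fun j hj => ?_, hl⟩
            have h1 : j.1 < k := hj
            rw [hym j h1, hxm j h1]
  obtain ⟨m, hm, hmin⟩ := key d le_rfl
  exact ⟨m, hm, fun x hx => (hmin x hx).imp_left fun h => funext fun j => h j j.2⟩

theorem tv_dim (d : ℕ) (ι : Fin d → Type*) [∀ i, Fintype (ι i)]
    (z : ∀ i, ι i → Fin d → ℝ) (w : ∀ i, ι i → ℝ) (m : Fin d → ℝ)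
    (hz : ∀ i, AffineIndependent ℝ (z i)) (hw0 : ∀ i k, 0 < w i k) (hw1 : ∀ i, ∑ k, w i k = 1)
    (hwm : ∀ i, ∑ k, w i k • z i k = m)
    (hmin : ∀ x, (∀ i, x ∈ convexHull ℝ (Set.range (z i))) → ¬ LexLt x m) :
    ∑ i, Fintype.card (ι i) ≤ d * d := by
  classical
  by_contra hlt
  push Not at hlt
  let L : (((i : Fin d) × ι i) → ℝ) × (Fin d → ℝ) →ₗ[ℝ] Fin d × Option (Fin d) → ℝ :=
    { toFun := fun u s => ∑ k, u.1 ⟨s.1, k⟩ * (s.2.elim 1 (z s.1 k)) - s.2.elim 0 u.2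
      map_add' := by
        rintro ⟨u, v⟩ ⟨u', v'⟩
        ext ⟨i, o⟩
        cases o <;> simp [add_mul, Finset.sum_add_distrib]
        ring
      map_smul' := by
        rintro r ⟨u, v⟩
        ext ⟨i, o⟩
        cases o <;> simp [mul_assoc, Finset.mul_sum, mul_sub] }
  have hker : LinearMap.ker L ≠ ⊥ := by
    apply LinearMap.ker_ne_bot_of_finrank_lt
    simp only [Module.finrank_prod, Module.finrank_fintype_fun_eq_card, Fintype.card_sigma,
      Fintype.card_prod, Fintype.card_option, Fintype.card_fin]
    nlinarith
  obtain ⟨⟨u, v⟩, huv, hne⟩ := (Submodule.ne_bot_iff _).1 hker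
  have hL : ∀ (i : Fin d) (o : Option (Fin d)), ∑ k, u ⟨i, k⟩ * (o.elim 1 (z i k)) - o.elim 0 v = 0 := fun i o =>
    congrFun (LinearMap.mem_ker.1 huv) (i, o)
  have hu0 : ∀ i, ∑ k, u ⟨i, k⟩ = 0 := fun i => by simpa using hL i none
  have huv' : ∀ i, ∑ k, u ⟨i, k⟩ • z i k = v := by
    intro i
    ext t
    have := hL i (some t)
    simp only [Option.elim_some] at this
    simp only [Finset.sum_apply, Pi.smul_apply, smul_eq_mul]
    linarith
  have hv : v ≠ 0 := by
    intro hv0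
    apply hne
    rw [Prod.mk_eq_zero]
    refine ⟨?_, hv0⟩
    ext ⟨i, k⟩
    exact (hz i).eq_zero_of_sum_eq_zero (s := Finset.univ) (w := fun k => u ⟨i, k⟩) (hu0 i)
      (by rw [huv', hv0]) k (Finset.mem_univ k)
  have hev : ∀ᶠ e : ℝ in nhdsWithin 0 (Set.Ioi 0), ∀ s : (i : Fin d) × ι i,
      0 < w s.1 s.2 - e * |u s| := by
    rw [Filter.eventually_all]
    intro s
    apply Filter.Eventually.filter_mono nhdsWithin_le_nhds
    have hc : Continuous fun e : ℝ => w s.1 s.2 - e * |u s| := by fun_prop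
    apply (hc.tendsto 0).eventually (lt_mem_nhds _)
    simpa using hw0 s.1 s.2
  obtain ⟨e, he, he0⟩ := (hev.and self_mem_nhdsWithin).exists
  have he0 : 0 < e := he0
  have hmem : ∀ σ : ℝ, |σ| = 1 → ∀ i, m + (σ * e) • v ∈ convexHull ℝ (Set.range (z i)) := by
    intro σ hσ i
    apply mem_convexHull_of_exists_fintype (fun k => w i k + σ * e * u ⟨i, k⟩) (z i)
    · intro k
      have h1 := he ⟨i, k⟩
      have h2 : |σ * e * u ⟨i, k⟩| = e * |u ⟨i, k⟩| := by
        rw [abs_mul, abs_mul, hσ, abs_of_pos he0, one_mul]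
      have h3 := neg_abs_le (σ * e * u ⟨i, k⟩)
      simp only at h1
      linarith
    · rw [Finset.sum_add_distrib, ← Finset.mul_sum, hu0, hw1]; simp
    · intro k; exact ⟨k, rfl⟩
    · simp only [add_smul, Finset.sum_add_distrib, hwm, mul_smul]
      rw [← huv' i]
      simp only [Finset.smul_sum]
  have h1 := tv_lex_total _ _ (hmin _ (hmem 1 (by simp)))
  have h2 := tv_lex_total _ _ (hmin _ (hmem (-1) (by simp)))
  rcases h1 with h1 | ⟨i, hi, hi'⟩
  · apply hv
    have h3 : (1 * e) • v = 0 := by simpa using h1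
    simpa [he0.ne'] using h3
  rcases h2 with h2 | ⟨j, hj, hj'⟩
  · apply hv
    have h3 : (-1 * e) • v = 0 := by simpa using h2
    simpa [he0.ne'] using h3
  simp at hi' hj'
  have hvi : 0 < v i := by
    by_contra hc
    push Not at hc
    nlinarith
  have hvj : v j < 0 := by
    by_contra hc
    push Not at hc
    nlinarith
  rcases lt_trichotomy i j with h | h | h
  · have := hj i h
    simp [he0.ne'] at this
    linarith
  · subst h; linarith
  · have := hi j h
    simp [he0.ne'] at this
    linarith

theorem tv_fill {K I : Type*} [Fintype K] [Fintype I] [DecidableEq I] [DecidableEq K] (n : ℕ)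
    (c : K → I) (F : I → Finset K) (hF : ∀ i, ∀ k ∈ F i, c k = i) (hFn : ∀ i, (F i).card ≤ n)
    (hcard : Fintype.card K ≤ Fintype.card I * n) :
    ∃ c' : K → I, (∀ i, ∀ k ∈ F i, c' k = i) ∧
      ∀ i, (Finset.univ.filter fun k => c' k = i).card ≤ n := by
  let B := Finset.univ.biUnion F
  have key : ∀ U : Finset K, ∃ c' : K → I, (∀ i, ∀ k ∈ F i, c' k = i) ∧
      ∀ i, ((B ∪ U).filter fun k => c' k = i).card ≤ n := by
    intro U
    induction U using Finset.induction_on with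
    | empty =>
      refine ⟨c, hF, fun i => le_trans (Finset.card_le_card ?_) (hFn i)⟩
      intro k hk
      simp only [Finset.union_empty, Finset.mem_filter, B, Finset.mem_biUnion, Finset.mem_univ,
        true_and] at hk
      obtain ⟨⟨j, hj⟩, hk⟩ := hk
      rw [← hk, hF j k hj]
      exact hj
    | insert x U hx ih =>
      obtain ⟨c', h1, h2⟩ := ih
      by_cases hxB : x ∈ B ∪ U
      · refine ⟨c', h1, ?_⟩
        rwa [Finset.union_insert, Finset.insert_eq_of_mem hxB]
      have hlt : (B ∪ U).card < Fintype.card I * n := by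
        refine lt_of_lt_of_le ?_ hcard
        rw [← Finset.card_univ]
        apply Finset.card_lt_card
        rw [Finset.ssubset_univ_iff]
        intro h
        exact hxB (h ▸ Finset.mem_univ x)
      have hex : ∃ i, ((B ∪ U).filter fun k => c' k = i).card < n := by
        by_contra hno
        push Not at hno
        have h3 := Finset.card_eq_sum_card_fiberwise (s := B ∪ U) (t := Finset.univ) (f := c')
          (by intro k _; simp)
        have h4 : ∑ _i : I, n ≤ ∑ i, ((B ∪ U).filter fun k => c' k = i).card :=
          Finset.sum_le_sum fun i _ => hno i
        simp at h4
        omega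
      obtain ⟨i, hi⟩ := hex
      refine ⟨Function.update c' x i, ?_, ?_⟩
      · intro j k hk
        have : k ≠ x := by
          rintro rfl
          exact hxB (Finset.mem_union_left _ (Finset.mem_biUnion.2 ⟨j, Finset.mem_univ _, hk⟩))
        rw [Function.update_of_ne this]
        exact h1 j k hk
      · intro j
        have hcongr : (B ∪ U).filter (fun k => Function.update c' x i k = j)
            = (B ∪ U).filter (fun k => c' k = j) := by
          apply Finset.filter_congr
          intro k hk
          have : k ≠ x := by
            rintro rfl
            exact hxB hk
          rw [Function.update_of_ne this]
        rw [Finset.union_insert, Finset.filter_insert, hcongr]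
        split_ifs with h
        · rw [Function.update_self] at h
          subst h
          exact le_trans (Finset.card_insert_le _ _) hi
        · exact h2 j
  obtain ⟨c', h1, h2⟩ := key Finset.univ
  refine ⟨c', h1, fun i => le_trans (Finset.card_le_card ?_) (h2 i)⟩
  intro k hk
  simpa using hk

theorem tv_helly {d : ℕ} (A : Option (Fin d) → Set (Fin d → ℝ)) (hA : ∀ i, Convex ℝ (A i))
    (m : Fin d → ℝ) (hm : ∀ i, m ∈ A i) (hmin : ∀ x, (∀ i, x ∈ A i) → ¬ LexLt x m) :
    ∃ j, ∀ x, (∀ i, i ≠ j → x ∈ A i) → ¬ LexLt x m := by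
  classical
  by_contra hno
  push Not at hno
  let F : Option (Option (Fin d)) → Set (Fin d → ℝ) := fun o => o.elim {x | LexLt x m} A
  have h := Convex.helly_theorem (𝕜 := ℝ) (F := F) (s := Finset.univ) (by simp)
    (by
      intro o _
      cases o with
      | none => exact tv_lex_convex m
      | some i => exact hA i)
    (by
      intro I _ hI
      simp only [Module.finrank_fintype_fun_eq_card, Fintype.card_fin] at hI
      have : ∃ o, o ∉ I := by
        by_contra hall
        push Not at hall
        have : I = Finset.univ := Finset.eq_univ_of_forall hall
        rw [this] at hI
        simp at hI
      obtain ⟨o, ho⟩ := this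
      cases o with
      | none =>
        refine ⟨m, Set.mem_iInter₂.2 fun o' ho' => ?_⟩
        cases o' with
        | none => exact absurd ho' ho
        | some i => exact hm i
      | some j =>
        obtain ⟨x, hx, hxm⟩ := hno j
        refine ⟨x, Set.mem_iInter₂.2 fun o' ho' => ?_⟩
        cases o' with
        | none => exact hxm
        | some i => exact hx i (by rintro rfl; exact ho ho'))
  obtain ⟨x, hx⟩ := h
  rw [Set.mem_iInter₂] at hx
  exact hmin x (fun i => hx (some i) (Finset.mem_univ _)) (hx none (Finset.mem_univ _))

theorem tv_cara {K : Type*} {d : ℕ} (p : K → Fin d → ℝ) (A : Set K) (x : Fin d → ℝ)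
    (hx : x ∈ convexHull ℝ (p '' A)) :
    ∃ F : Finset K, (∀ k ∈ F, k ∈ A) ∧ F.card ≤ d + 1 ∧ x ∈ convexHull ℝ (p '' (F : Set K)) := by
  classical
  obtain ⟨ι, _, z, w, hz, hind, hw0, hw1, hwx⟩ := eq_pos_convex_span_of_mem_convexHull hx
  have hz' : ∀ t, ∃ k, k ∈ A ∧ p k = z t := fun t => hz ⟨t, rfl⟩
  choose f hfA hfz using hz'
  refine ⟨Finset.univ.image f, ?_, ?_, ?_⟩
  · intro k hk
    obtain ⟨t, _, rfl⟩ := Finset.mem_image.1 hk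
    exact hfA t
  · refine le_trans Finset.card_image_le ?_
    rw [Finset.card_univ]
    have h1 := hind.card_le_finrank_succ
    have h2 := Submodule.finrank_le (vectorSpan ℝ (Set.range z))
    simp only [Module.finrank_fintype_fun_eq_card, Fintype.card_fin] at h2
    omega
  · exact mem_convexHull_of_exists_fintype w z (fun i => (hw0 i).le) hw1
      (fun t => ⟨f t, by simp, hfz t⟩) hwx

/-- for a set `P` of `d²+d+1` points in general position in `ℝ^d`
there is a `(d+1)`-point subset `S ⊆ P` and a partition of `P \ S` into `d` sets
whose convex hulls have a common point, such that the lexicographic minimum of the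
intersection of these convex hulls lies in `conv(S)`. -/
theorem exists_tverberg_point_in_simplex (d n : ℕ) (hd : 1 ≤ d)
    (hn : n = d ^ 2 + d + 1) (P : Finset (Fin d → ℝ)) (hcard : P.card = n)
    (hgen : ∀ T : Finset (Fin d → ℝ), T ⊆ P → T.card = d + 1 →
      AffineIndependent ℝ (fun x : T => (x : Fin d → ℝ))) :
    ∃ S : Finset (Fin d → ℝ), S ⊆ P ∧ S.card = d + 1 ∧
      ∃ D : Fin d → Finset (Fin d → ℝ),
        (∀ i j, i ≠ j → Disjoint (D i) (D j)) ∧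
        (⋃ i, (D i : Set (Fin d → ℝ))) = (P : Set (Fin d → ℝ)) \ (S : Set (Fin d → ℝ)) ∧
        ∃ m : Fin d → ℝ,
          IsLexMin (⋂ i, convexHull ℝ (D i : Set (Fin d → ℝ))) m ∧
          m ∈ convexHull ℝ (S : Set (Fin d → ℝ)) := by
  classical
  have hcard' : Fintype.card P = d * (d + 1) + 1 := by
    rw [Fintype.card_coe, hcard, hn]; ring
  let H : (P → Option (Fin d)) → Option (Fin d) → Set (Fin d → ℝ) :=
    fun c i => convexHull ℝ ((Subtype.val : P → Fin d → ℝ) '' {k | c k = i})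
  have hHc : ∀ c i, IsCompact (H c i) := fun c i => (Set.toFinite _).isCompact_convexHull ℝ
  let X : Set (Fin d → ℝ) := ⋃ c, ⋂ i, H c i
  have hXc : IsCompact X := by
    apply isCompact_iUnion
    intro c
    exact (hHc c none).of_isClosed_subset (isClosed_iInter fun i => (hHc c i).isClosed)
      (Set.iInter_subset _ none)
  have hXne : X.Nonempty := by
    obtain ⟨c, x, hx⟩ := tv_tverberg d (by omega) (Subtype.val : P → Fin d → ℝ)
    exact ⟨x, Set.mem_iUnion.2 ⟨c, Set.mem_iInter.2 hx⟩⟩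
  obtain ⟨m, hmX, hmmin⟩ := tv_lexmin_exists X hXc hXne
  have hmX' : ∀ x ∈ X, ¬ LexLt x m := by
    rintro x hx ⟨i, hi, hi'⟩
    rcases hmmin x hx with h | ⟨j, hj, hj'⟩
    · rw [h] at hi'; exact lt_irrefl _ hi'
    · rcases lt_trichotomy i j with h | h | h
      · have := hj i h; linarith
      · subst h; linarith
      · have := hi j h; linarith
  obtain ⟨c0, hc0⟩ := Set.mem_iUnion.1 hmX
  have hc0' : ∀ i, m ∈ H c0 i := Set.mem_iInter.1 hc0
  choose F hFc hFn hFm using fun i => tv_cara _ _ m (hc0' i)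
  obtain ⟨c, hcF, hcn⟩ := tv_fill (d + 1) c0 F hFc hFn (by
    rw [hcard', Fintype.card_option, Fintype.card_fin]; nlinarith)
  have hmc : ∀ i, m ∈ H c i := fun i =>
    convexHull_mono (Set.image_mono fun k hk => hcF i k hk) (hFm i)
  obtain ⟨j, hj⟩ := tv_helly (H c) (fun i => convex_convexHull ℝ _) m hmc
    (fun x hx => hmX' x (Set.mem_iUnion.2 ⟨c, Set.mem_iInter.2 hx⟩))
  -- the parts as finsets
  let A : Option (Fin d) → Finset (Fin d → ℝ) := fun i =>
    (Finset.univ.filter fun k : P => c k = i).image Subtype.val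
  have hAH : ∀ i, convexHull ℝ (A i : Set (Fin d → ℝ)) = H c i := by
    intro i
    simp [A, H]
  have hAmem : ∀ i x, x ∈ A i ↔ ∃ h : x ∈ P, c ⟨x, h⟩ = i := by
    intro i x
    simp [A]
  have hAn : ∀ i, (A i).card ≤ d + 1 := fun i => le_trans Finset.card_image_le (hcn i)
  let e : Fin d ≃ {i : Option (Fin d) // i ≠ j} := (Fintype.equivFinOfCardEq (by
    rw [Fintype.card_subtype_compl]; simp)).symm
  have hme : ∀ i, m ∈ convexHull ℝ (A (e i).1 : Set (Fin d → ℝ)) := fun i => by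
    rw [hAH]; exact hmc _
  have hje : ∀ x, (∀ i, x ∈ convexHull ℝ (A (e i).1 : Set (Fin d → ℝ))) → ¬ LexLt x m := by
    intro x hx
    apply hj
    intro i hi
    have := hx (e.symm ⟨i, hi⟩)
    rwa [hAH, Equiv.apply_symm_apply] at this
  choose ι _ z w hz hind hw0 hw1 hwm using fun i => eq_pos_convex_span_of_mem_convexHull (hme i)
  have hdim := tv_dim d ι z w m hind hw0 hw1 hwm
    (fun x hx => hje x fun i => convexHull_mono (hz i) (hx i))
  let G : Fin d → Finset (Fin d → ℝ) := fun i => Finset.univ.image (z i)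
  let B := Finset.univ.biUnion G
  have hBn : B.card ≤ d * d := by
    refine le_trans Finset.card_biUnion_le (le_trans (Finset.sum_le_sum fun i _ => ?_) hdim)
    exact Finset.card_image_le
  have hGA : ∀ i, G i ⊆ A (e i).1 := by
    intro i x hx
    obtain ⟨t, _, rfl⟩ := Finset.mem_image.1 hx
    exact hz i ⟨t, rfl⟩
  have hAP : ∀ i, A i ⊆ P := fun i x hx => ((hAmem i x).1 hx).1
  have hdisj : ∀ i i' x, x ∈ A i → x ∈ A i' → i = i' := by
    intro i i' x hx hx'
    obtain ⟨h, hc1⟩ := (hAmem i x).1 hx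
    obtain ⟨h', hc2⟩ := (hAmem i' x).1 hx'
    rw [← hc1, ← hc2]
  have hjB : A j ⊆ P \ B := by
    intro x hx
    rw [Finset.mem_sdiff]
    refine ⟨hAP j hx, fun hxB => ?_⟩
    obtain ⟨i, _, hi⟩ := Finset.mem_biUnion.1 hxB
    exact (e i).2 (hdisj _ _ x (hGA i hi) hx)
  obtain ⟨S, hjS, hSB, hScard⟩ := Finset.exists_subsuperset_card_eq hjB (hAn j) (by
    have := Finset.le_card_sdiff B P
    rw [hcard, hn] at this
    have h2 : d ^ 2 = d * d := sq d
    omega)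
  have hmD : ∀ i, m ∈ convexHull ℝ ((A (e i).1 \ S : Finset (Fin d → ℝ)) : Set (Fin d → ℝ)) := by
    intro i
    apply mem_convexHull_of_exists_fintype (w i) (z i) (fun t => (hw0 i t).le) (hw1 i) _ (hwm i)
    intro t
    have hG : z i t ∈ G i := Finset.mem_image_of_mem _ (Finset.mem_univ t)
    rw [Finset.mem_coe, Finset.mem_sdiff]
    refine ⟨hGA i hG, fun hS => ?_⟩
    exact (Finset.mem_sdiff.1 (hSB hS)).2 (Finset.mem_biUnion.2 ⟨i, Finset.mem_univ _, hG⟩)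
  refine ⟨S, fun x hx => (Finset.mem_sdiff.1 (hSB hx)).1, hScard,
    fun i => A (e i).1 \ S, ?_, ?_, m, ⟨Set.mem_iInter.2 hmD, ?_⟩, ?_⟩
  · intro i i' hii
    rw [Finset.disjoint_left]
    intro x hx hx'
    apply hii
    apply e.injective
    exact Subtype.ext (hdisj _ _ x (Finset.mem_sdiff.1 hx).1 (Finset.mem_sdiff.1 hx').1)
  · ext x
    simp only [Set.mem_iUnion, Finset.mem_coe, Finset.mem_sdiff, Set.mem_diff]
    constructor
    · rintro ⟨i, hi, hS⟩
      exact ⟨hAP _ hi, hS⟩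
    · rintro ⟨hP, hS⟩
      have hxA : x ∈ A (c ⟨x, hP⟩) := (hAmem _ x).2 ⟨hP, rfl⟩
      have hne : c ⟨x, hP⟩ ≠ j := by
        intro h
        rw [h] at hxA
        exact hS (hjS hxA)
      refine ⟨e.symm ⟨_, hne⟩, ?_, hS⟩
      rw [Equiv.apply_symm_apply]
      exact hxA
  · intro x hx
    apply tv_lex_total
    apply hje
    intro i
    exact convexHull_mono (Finset.coe_subset.2 Finset.sdiff_subset) (Set.mem_iInter.1 hx i)
  · have h1 := hmc j
    rw [← hAH] at h1
    exact convexHull_mono (Finset.coe_subset.2 hjS) h1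
end

section
/- Let (X, S) be a finite set system of VC-dimension at most d on n elements. Then for every r ≥ 2 there exists a subset N ⊆ X of size O(d·r·log r) such that every S' ∈ S with |S'| > n/r contains a point of N. -/
/-- `A` is shattered by the set system `𝒮`. -/
def Shattered {α : Type} [DecidableEq α] (𝒮 : Finset (Finset α)) (A : Finset α) : Prop :=
  ∀ B ⊆ A, ∃ S' ∈ 𝒮, S' ∩ A = B

/-- weight of a pair of sample points with respect to a set -/
noncomputable def pairWeight {α : Type} [DecidableEq α] (T : Finset α) (p : α × α) : ℝ :=
  if p.1 ∈ T then 0 else if p.2 ∈ T then 2 else 1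

lemma pairWeight_nonneg {α : Type} [DecidableEq α] (T : Finset α) (p : α × α) :
    0 ≤ pairWeight T p := by
  unfold pairWeight; split_ifs <;> norm_num

lemma pairWeight_add {α : Type} [DecidableEq α] (T : Finset α) (p : α × α) :
    pairWeight T p + pairWeight T p.swap ≤ 2 := by
  unfold pairWeight
  simp only [Prod.fst_swap, Prod.snd_swap]
  split_ifs <;> norm_num

/-- the support of a double sample -/
def supp {α : Type} [DecidableEq α] {m : ℕ} (z : Fin m → α × α) : Finset α :=
  Finset.univ.biUnion fun i => {(z i).1, (z i).2}

/-- swap according to a sign pattern -/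
def sw {β : Type} {m : ℕ} (σ : Fin m → Bool) (z : Fin m → β × β) : Fin m → β × β :=
  fun i => if σ i then (z i).swap else z i

lemma sw_sw {β : Type} {m : ℕ} (σ : Fin m → Bool) (z : Fin m → β × β) : sw σ (sw σ z) = z := by
  funext i
  unfold sw
  by_cases h : σ i <;> simp [h]

lemma supp_sw {α : Type} [DecidableEq α] {m : ℕ} (σ : Fin m → Bool) (z : Fin m → α × α) :
    supp (sw σ z) = supp z := by
  unfold supp sw
  congr 1
  funext i
  by_cases h : σ i <;> simp [h, Finset.pair_comm]

lemma card_supp_le {α : Type} [DecidableEq α] {m : ℕ} (z : Fin m → α × α) :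
    (supp z).card ≤ 2 * m := by
  unfold supp
  refine Finset.card_biUnion_le.trans ?_
  calc _ ≤ ∑ i : Fin m, 2 := Finset.sum_le_sum fun i _ => Finset.card_le_two
    _ = 2 * m := by simp [mul_comm]

/-- Sauer-Shelah in weighted form. -/
lemma card_trace_le {α : Type} [DecidableEq α] (𝒮 : Finset (Finset α)) (X A : Finset α)
    (hA : A ⊆ X) (d : ℕ) (hd : ∀ A ⊆ X, Shattered 𝒮 A → A.card ≤ d) (t : ℝ) (ht : 0 ≤ t)
    (ht1 : t ≤ 1) (M : ℕ) (hM : A.card ≤ M) :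
    ((𝒮.image (· ∩ A)).card : ℝ) * t ^ d ≤ (1 + t) ^ M := by
  set 𝒯 := 𝒮.image (· ∩ A) with h𝒯
  have key : ∀ B ∈ 𝒯.shatterer, B ⊆ A ∧ B.card ≤ d := by
    intro B hB
    rw [Finset.mem_shatterer] at hB
    have hBA : B ⊆ A := by
      obtain ⟨t, ht, hBt⟩ := hB.exists_superset
      rw [h𝒯, Finset.mem_image] at ht
      obtain ⟨s, -, rfl⟩ := ht
      exact hBt.trans Finset.inter_subset_right
    refine ⟨hBA, hd B (hBA.trans hA) ?_⟩
    intro D hD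
    obtain ⟨u, hu, hBu⟩ := hB hD
    rw [h𝒯, Finset.mem_image] at hu
    obtain ⟨s, hs, rfl⟩ := hu
    refine ⟨s, hs, ?_⟩
    rw [← hBu]
    ext a
    simp only [Finset.mem_inter]
    constructor
    · rintro ⟨h1, h2⟩; exact ⟨h2, h1, hBA h2⟩
    · rintro ⟨h1, h2, _⟩; exact ⟨h2, h1⟩
  have h1 : (𝒯.card : ℝ) ≤ 𝒯.shatterer.card := by exact_mod_cast 𝒯.card_le_card_shatterer
  calc (𝒯.card : ℝ) * t ^ d ≤ 𝒯.shatterer.card * t ^ d := by gcongr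
    _ = ∑ B ∈ 𝒯.shatterer, t ^ d := by simp
    _ ≤ ∑ B ∈ 𝒯.shatterer, t ^ B.card :=
        Finset.sum_le_sum fun B hB => pow_le_pow_of_le_one ht ht1 (key B hB).2
    _ ≤ ∑ B ∈ A.powerset, t ^ B.card :=
        Finset.sum_le_sum_of_subset_of_nonneg
          (fun B hB => Finset.mem_powerset.2 (key B hB).1) (fun _ _ _ => by positivity)
    _ = (1 + t) ^ A.card := by
        have := Finset.sum_pow_mul_eq_add_pow t 1 A
        simp only [one_pow, mul_one] at this
        rw [this, add_comm]
    _ ≤ (1 + t) ^ M := pow_le_pow_right₀ (by linarith) hM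

lemma prod_weight_inter {α : Type} [DecidableEq α] {m : ℕ} (S : Finset α) (z : Fin m → α × α) :
    ∏ i, pairWeight (S ∩ supp z) (z i) = ∏ i, pairWeight S (z i) := by
  refine Finset.prod_congr rfl fun i _ => ?_
  have h1 : (z i).1 ∈ supp z := Finset.mem_biUnion.2 ⟨i, Finset.mem_univ _, by simp⟩
  have h2 : (z i).2 ∈ supp z := Finset.mem_biUnion.2 ⟨i, Finset.mem_univ _, by simp⟩
  simp [pairWeight, h1, h2]

lemma sum_sw_le {α : Type} [DecidableEq α] {m : ℕ} (T : Finset α) (z : Fin m → α × α) :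
    ∑ σ : Fin m → Bool, ∏ i, pairWeight T (sw σ z i) ≤ 2 ^ m := by
  have h := Finset.prod_univ_sum (fun _ : Fin m => (Finset.univ : Finset Bool))
    (fun i b => pairWeight T (if b then (z i).swap else z i))
  rw [Fintype.piFinset_univ] at h
  unfold sw
  rw [← h]
  calc _ ≤ ∏ i : Fin m, (2 : ℝ) := by
        refine Finset.prod_le_prod (fun i _ => Finset.sum_nonneg fun _ _ => pairWeight_nonneg _ _) ?_
        intro i _
        have := pairWeight_add T (z i)
        simp; linarith
    _ = 2 ^ m := by simp

/-- the coercion of a double sample -/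
def coeS {α : Type} {X : Finset α} {m : ℕ} (z : Fin m → X × X) : Fin m → α × α :=
  fun i => ((z i).1, (z i).2)

lemma coeS_sw {α : Type} {X : Finset α} {m : ℕ} (σ : Fin m → Bool) (z : Fin m → X × X) :
    coeS (sw σ z) = sw σ (coeS z) := by
  funext i
  unfold coeS sw
  by_cases h : σ i <;> simp [h]

lemma supp_coeS {α : Type} [DecidableEq α] {X : Finset α} {m : ℕ} (z : Fin m → X × X) :
    supp (coeS z) ⊆ X := by
  intro a ha
  simp only [supp, coeS, Finset.mem_biUnion, Finset.mem_insert, Finset.mem_singleton] at ha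
  obtain ⟨i, -, rfl | rfl⟩ := ha <;> simp

/-- total weight of the traces -/
noncomputable def H {α : Type} [DecidableEq α] (𝒮 : Finset (Finset α)) {m : ℕ}
    (z : Fin m → α × α) : ℝ :=
  ∑ T ∈ 𝒮.image (· ∩ supp z), ∏ i, pairWeight T (z i)

lemma sum_H_le {α : Type} [DecidableEq α] (X : Finset α) (𝒮 : Finset (Finset α)) (m : ℕ) :
    ∑ z : Fin m → X × X, H 𝒮 (coeS z) ≤
      ∑ z : Fin m → X × X, ((𝒮.image (· ∩ supp (coeS z))).card : ℝ) := by
  have hσ : ∀ σ : Fin m → Bool, ∑ z : Fin m → X × X, H 𝒮 (coeS (sw σ z)) =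
      ∑ z : Fin m → X × X, H 𝒮 (coeS z) := by
    intro σ
    exact Equiv.sum_comp (⟨sw σ, sw σ, sw_sw σ, sw_sw σ⟩ : (Fin m → X × X) ≃ (Fin m → X × X))
      (fun z => H 𝒮 (coeS z))
  have h1 : (2 : ℝ) ^ m * ∑ z : Fin m → X × X, H 𝒮 (coeS z) =
      ∑ z : Fin m → X × X, ∑ σ : Fin m → Bool, H 𝒮 (coeS (sw σ z)) := by
    rw [Finset.sum_comm, Finset.sum_congr rfl (fun σ _ => hσ σ)]
    simp
  have h2 : ∀ z : Fin m → X × X, ∑ σ : Fin m → Bool, H 𝒮 (coeS (sw σ z)) ≤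
      2 ^ m * ((𝒮.image (· ∩ supp (coeS z))).card : ℝ) := by
    intro z
    simp only [H, coeS_sw, supp_sw]
    rw [Finset.sum_comm]
    refine (Finset.sum_le_sum fun T _ => sum_sw_le T (coeS z)).trans ?_
    simp [mul_comm]
  have h3 := Finset.sum_le_sum fun z (_ : z ∈ Finset.univ) => h2 z
  rw [← h1, ← Finset.mul_sum] at h3
  exact le_of_mul_le_mul_left h3 (by positivity)

lemma sum_weight_of_avoid {α : Type} [DecidableEq α] (X S : Finset α) (hS : S ⊆ X) (m : ℕ)
    (x : Fin m → X) (hx : ∀ i, (x i : α) ∉ S) :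
    ∑ y : Fin m → X, ∏ i, pairWeight S ((x i : α), (y i : α)) = ((X.card : ℝ) + S.card) ^ m := by
  have h := Finset.prod_univ_sum (fun _ : Fin m => (Finset.univ : Finset X))
    (fun i b => pairWeight S ((x i : α), (b : α)))
  rw [Fintype.piFinset_univ] at h
  rw [← h]
  have h2 : ∀ i, ∑ b : X, pairWeight S ((x i : α), (b : α)) = (X.card : ℝ) + S.card := by
    intro i
    have h3 : ∀ b : α, pairWeight S ((x i : α), b) = 1 + if b ∈ S then 1 else 0 := by
      intro b
      simp only [pairWeight, hx i, if_false]
      split_ifs <;> norm_num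
    simp only [h3]
    rw [Finset.sum_coe_sort X (fun b => (1 : ℝ) + if b ∈ S then 1 else 0), Finset.sum_add_distrib]
    simp [Finset.inter_eq_right.2 hS]
  rw [Finset.prod_congr rfl fun i _ => h2 i]
  simp

lemma main_ineq {α : Type} [DecidableEq α] (X : Finset α) (hX : X.Nonempty)
    (𝒮 : Finset (Finset α)) (hS : ∀ S' ∈ 𝒮, S' ⊆ X) (d : ℕ)
    (hd : ∀ A ⊆ X, Shattered 𝒮 A → A.card ≤ d) (r : ℝ) (hr : 0 < r) (m : ℕ)
    (hno : ∀ N ⊆ X, N.card ≤ m →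
      ∃ S' ∈ 𝒮, (X.card : ℝ) / r < (S'.card : ℝ) ∧ ¬ (S' ∩ N).Nonempty)
    (t : ℝ) (ht : 0 ≤ t) (ht1 : t ≤ 1) :
    (1 + 1 / r) ^ m * t ^ d ≤ (1 + t) ^ (2 * m) := by
  have hex : ∀ x : Fin m → X, ∃ S' ∈ 𝒮, (X.card : ℝ) / r < (S'.card : ℝ) ∧
      ∀ i, (x i : α) ∉ S' := by
    intro x
    obtain ⟨S', h1, h2, h3⟩ := hno (Finset.univ.image fun i => (x i : α))
      (by intro a ha; simp only [Finset.mem_image] at ha; obtain ⟨i, -, rfl⟩ := ha; simp)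
      (Finset.card_image_le.trans (by simp))
    refine ⟨S', h1, h2, fun i hi => h3 ⟨x i, ?_⟩⟩
    simp [hi]
  choose f hf1 hf2 hf3 using hex
  have hn : (0 : ℝ) < X.card := by exact_mod_cast hX.card_pos
  set n : ℝ := (X.card : ℝ) with hn'
  have lower : n ^ m * (n * (1 + 1 / r)) ^ m ≤ ∑ z : Fin m → X × X, H 𝒮 (coeS z) := by
    rw [← Equiv.sum_comp (Equiv.arrowProdEquivProdArrow (Fin m) (fun _ => X) (fun _ => X)).symm,
      Fintype.sum_prod_type]
    calc n ^ m * (n * (1 + 1 / r)) ^ m = ∑ x : Fin m → X, (n * (1 + 1 / r)) ^ m := by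
          simp [hn']
      _ ≤ ∑ x : Fin m → X, (n + (f x).card) ^ m := by
          refine Finset.sum_le_sum fun x _ => ?_
          have := hf2 x
          have h4 : n * (1 + 1 / r) = n + n / r := by ring
          rw [h4]
          gcongr
      _ ≤ _ := by
          refine Finset.sum_le_sum fun x _ => ?_
          rw [hn', ← sum_weight_of_avoid X (f x) (hS _ (hf1 x)) m x (hf3 x)]
          refine Finset.sum_le_sum fun y _ => ?_
          set z := coeS ((Equiv.arrowProdEquivProdArrow (Fin m) (fun _ => X) (fun _ => X)).symm
            (x, y)) with hz
          have h5 : ∏ i, pairWeight (f x) ((x i : α), (y i : α)) =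
              ∏ i, pairWeight (f x ∩ supp z) (z i) := by
            rw [prod_weight_inter]; rfl
          rw [h5]
          unfold H
          exact Finset.single_le_sum (f := fun T => ∏ i, pairWeight T (z i))
            (fun T _ => Finset.prod_nonneg fun i _ => pairWeight_nonneg _ _)
            (Finset.mem_image_of_mem _ (hf1 x))
  have upper := lower.trans (sum_H_le X 𝒮 m)
  have h6 : (n ^ m * (n * (1 + 1 / r)) ^ m) * t ^ d ≤ (n * n) ^ m * (1 + t) ^ (2 * m) := by
    calc _ ≤ (∑ z : Fin m → X × X, ((𝒮.image (· ∩ supp (coeS z))).card : ℝ)) * t ^ d := by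
          gcongr
      _ = ∑ z : Fin m → X × X, ((𝒮.image (· ∩ supp (coeS z))).card : ℝ) * t ^ d :=
          Finset.sum_mul _ _ _
      _ ≤ ∑ z : Fin m → X × X, (1 + t) ^ (2 * m) :=
          Finset.sum_le_sum fun z _ => card_trace_le 𝒮 X _ (supp_coeS z) d hd t ht ht1 _
            (card_supp_le _)
      _ = _ := by simp [hn']
  have h7 : (n ^ m * (n * (1 + 1 / r)) ^ m) * t ^ d = (n * n) ^ m * ((1 + 1 / r) ^ m * t ^ d) := by
    rw [mul_pow, mul_pow]; ring
  rw [h7] at h6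
  exact le_of_mul_le_mul_left h6 (by positivity)

/-- Haussler–Welzl: there is an absolute constant `C` such that every
finite set system on `n` elements of VC-dimension at most `d ≥ 1` admits, for every
`r ≥ 2`, a strong `(1/r)`-net of size at most `C·d·r·log r`. -/
theorem strong_net_of_vc_dim : ∃ C : ℝ, 0 < C ∧
    ∀ (α : Type) (_ : DecidableEq α) (X : Finset α) (𝒮 : Finset (Finset α)),
      (∀ S' ∈ 𝒮, S' ⊆ X) →
      ∀ d : ℕ, 1 ≤ d → (∀ A ⊆ X, Shattered 𝒮 A → A.card ≤ d) →
      ∀ r : ℝ, 2 ≤ r →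
        ∃ N ⊆ X, (N.card : ℝ) ≤ C * d * r * Real.log r ∧
          ∀ S' ∈ 𝒮, (X.card : ℝ) / r < (S'.card : ℝ) → (S' ∩ N).Nonempty := by
  refine ⟨17, by norm_num, ?_⟩
  intro α _ X 𝒮 hS d hd1 hd r hr
  have hr0 : 0 < r := by linarith
  have hlog : Real.log 2 ≤ Real.log r := Real.log_le_log (by norm_num) hr
  have hlog2 := Real.log_two_gt_d9
  have hd1' : (1 : ℝ) ≤ d := by exact_mod_cast hd1
  rcases X.eq_empty_or_nonempty with rfl | hX
  · refine ⟨∅, Finset.Subset.refl _, ?_, ?_⟩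
    · have : 0 ≤ Real.log r := by linarith
      simp only [Finset.card_empty, Nat.cast_zero]
      positivity
    · intro S' hS' h
      have := Finset.subset_empty.1 (hS S' hS')
      simp [this] at h
  set L : ℝ := d * r * Real.log r with hL
  have hL1 : 1 ≤ L := by
    have h1 : (2 : ℝ) ≤ d * r := by nlinarith
    rw [hL]; nlinarith
  set m : ℕ := ⌊16 * L⌋₊ + 1 with hm
  have hm1 : 16 * L < m := by rw [hm]; push_cast; exact Nat.lt_floor_add_one _
  have hm2 : (m : ℝ) ≤ 17 * L := by
    have := Nat.floor_le (show 0 ≤ 16 * L by linarith)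
    rw [hm]; push_cast; linarith
  by_contra hcon
  push Not at hcon
  have hno : ∀ N ⊆ X, N.card ≤ m →
      ∃ S' ∈ 𝒮, (X.card : ℝ) / r < (S'.card : ℝ) ∧ ¬ (S' ∩ N).Nonempty := by
    intro N hN hNm
    have h1 : (N.card : ℝ) ≤ m := by exact_mod_cast hNm
    obtain ⟨S', h2, h3, h4⟩ := hcon N hN (by
      have : 17 * (d : ℝ) * r * Real.log r = 17 * L := by rw [hL]; ring
      rw [this]; linarith)
    exact ⟨S', h2, h3, by simpa using h4⟩
  have key := main_ineq X hX 𝒮 hS d hd r hr0 m hno (1 / (8 * r)) (by positivity)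
    (by rw [div_le_one (by positivity)]; linarith)
  have hp1 : (0 : ℝ) < 1 + 1 / r := by positivity
  have hp2 : (0 : ℝ) < 1 / (8 * r) := by positivity
  have hp3 : (0 : ℝ) < 1 + 1 / (8 * r) := by positivity
  have hk := Real.log_le_log (by positivity) key
  rw [Real.log_mul (by positivity) (by positivity), Real.log_pow, Real.log_pow, Real.log_pow] at hk
  have e1 : 1 / (2 * r) ≤ Real.log (1 + 1 / r) := by
    have h := Real.one_sub_inv_le_log_of_pos hp1
    refine le_trans ?_ h
    have : 1 - (1 + 1 / r)⁻¹ = 1 / (r + 1) := by field_simp; ring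
    rw [this]
    exact one_div_le_one_div_of_le (by linarith) (by linarith)
  have e2 : Real.log (1 + 1 / (8 * r)) ≤ 1 / (8 * r) := by
    have := Real.log_le_sub_one_of_pos hp3
    linarith
  have e3 : -(4 * Real.log r) ≤ Real.log (1 / (8 * r)) := by
    rw [one_div, Real.log_inv, Real.log_mul (by norm_num) (by positivity),
      show (8 : ℝ) = 2 ^ 3 by norm_num, Real.log_pow]
    push_cast
    linarith
  have hm0 : (0 : ℝ) ≤ m := by positivity
  have f1 := mul_le_mul_of_nonneg_left e1 hm0
  have f2 := mul_le_mul_of_nonneg_left e2 hm0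
  have f3 := mul_le_mul_of_nonneg_left e3 (by linarith : (0 : ℝ) ≤ d)
  push_cast at hk
  have g : (m : ℝ) * (1 / (2 * r)) - 2 * (m * (1 / (8 * r))) ≤ d * (4 * Real.log r) := by
    linarith
  have g2 : (m : ℝ) * (1 / (2 * r)) - 2 * (m * (1 / (8 * r))) = m / (4 * r) := by
    field_simp; ring
  rw [g2, div_le_iff₀ (by positivity)] at g
  have : (d : ℝ) * (4 * Real.log r) * (4 * r) = 16 * L := by rw [hL]; ring
  linarith
end
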